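/- arXiv:2312.10584 — 2 statements merged into one kernel-verified Lean document; each statement's English description precedes it below -/
import Mathlib

section
/- Suppose the policy π̂_RMB maximizes the empirical objective π ↦ Ê_s[s ↦ E_{a∼π(·|s)}[r̂(s,a)]] over all policies, i.e. Ê_s[s ↦ E_{a∼π̂_RMB(·|s)}[r̂(s,a)]] ≥ Ê_s[s ↦ E_{a∼π(·|s)}[r̂(s,a)]] for every policy π. Then the suboptimality of π̂_RMB under the true reward satisfies r(π*) − r(π̂_RMB) ≤ 2ε_r + 2ε_s. -/
open Finset

/-- A policy assigns to each state a probability distribution over actions. -/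
def IsPolicy {S A : Type*} [Fintype A] (π : S → A → ℝ) : Prop :=
  (∀ s a, 0 ≤ π s a) ∧ ∀ s, ∑ a, π s a = 1

/-- Value of a policy `π` under reward `g` and state distribution `ρ`:
`g(π) = ∑ s, ρ s * ∑ a, π a|s * g s a`. -/
noncomputable def polVal {S A : Type*} [Fintype S] [Fintype A]
    (ρ : S → ℝ) (π : S → A → ℝ) (g : S → A → ℝ) : ℝ :=
  ∑ s, ρ s * ∑ a, π s a * g s a

/-- Empirical state expectation over samples `samp : Fin n → S`:
`Ê_s[f] = (1/n) ∑ i, f (samp i)`. -/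
noncomputable def empS {S : Type*} {n : ℕ} (samp : Fin n → S) (f : S → ℝ) : ℝ :=
  (∑ i, f (samp i)) / n

/-- Averaging a pointwise bound `g ≤ h + ε` over `ρ` and `π` preserves it, since both have
total mass one. -/
theorem polVal_le_polVal_add {S A : Type*} [Fintype S] [Fintype A]
    {ρ : S → ℝ} (hρ0 : ∀ s, 0 ≤ ρ s) (hρ1 : ∑ s, ρ s = 1)
    {π : S → A → ℝ} (hπ : IsPolicy π) {g h : S → A → ℝ} {ε : ℝ}
    (hgh : ∀ s a, g s a ≤ h s a + ε) :
    polVal ρ π g ≤ polVal ρ π h + ε := by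
  have inner : ∀ s, ∑ a, π s a * g s a ≤ (∑ a, π s a * h s a) + ε := fun s =>
    calc ∑ a, π s a * g s a ≤ ∑ a, π s a * (h s a + ε) :=
          Finset.sum_le_sum fun a _ => mul_le_mul_of_nonneg_left (hgh s a) (hπ.1 s a)
      _ = (∑ a, π s a * h s a) + ε := by
          simp only [mul_add, Finset.sum_add_distrib, ← Finset.sum_mul, hπ.2 s, one_mul]
  calc polVal ρ π g ≤ ∑ s, ρ s * ((∑ a, π s a * h s a) + ε) :=
        Finset.sum_le_sum fun s _ => mul_le_mul_of_nonneg_left (inner s) (hρ0 s)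
    _ = polVal ρ π h + ε := by
        simp only [polVal, mul_add, Finset.sum_add_distrib, ← Finset.sum_mul, hρ1, one_mul]

theorem rmb_po_suboptimality
    {S A : Type*} [Fintype S] [Fintype A] [Nonempty S] [Nonempty A]
    (ρ : S → ℝ) (hρ0 : ∀ s, 0 ≤ ρ s) (hρ1 : ∑ s, ρ s = 1)
    (r rhat : S → A → ℝ)
    (hr : ∀ s a, 0 ≤ r s a ∧ r s a ≤ 1)
    (hrhat : ∀ s a, 0 ≤ rhat s a ∧ rhat s a ≤ 1)
    (εr : ℝ) (hεr0 : 0 ≤ εr)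
    (hεr : ∀ s a, |rhat s a - r s a| ≤ εr)
    (n : ℕ) (hn : 1 ≤ n) (samp : Fin n → S)
    (εs : ℝ) (hεs0 : 0 ≤ εs)
    (hεs : ∀ π : S → A → ℝ, IsPolicy π → ∀ g : S → A → ℝ,
      (∀ s a, 0 ≤ g s a ∧ g s a ≤ 1) →
      |polVal ρ π g - empS samp (fun s => ∑ a, π s a * g s a)| ≤ εs)
    (πstar : S → A → ℝ) (hπstar : IsPolicy πstar)
    (hopt : ∀ π : S → A → ℝ, IsPolicy π → polVal ρ π r ≤ polVal ρ πstar r)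
    (πRMB : S → A → ℝ) (hπRMB : IsPolicy πRMB)
    (hmax : ∀ π : S → A → ℝ, IsPolicy π →
      empS samp (fun s => ∑ a, π s a * rhat s a) ≤
      empS samp (fun s => ∑ a, πRMB s a * rhat s a)) :
    polVal ρ πstar r - polVal ρ πRMB r ≤ 2 * εr + 2 * εs := by
  -- `r(π*) ≤ r̂(π*) + εr ≤ Ê[π*] + εr + εs ≤ Ê[πRMB] + εr + εs
  --   ≤ r̂(πRMB) + εr + 2 εs ≤ r(πRMB) + 2 εr + 2 εs`, with `Ê[π]` the empirical objective.
  have h1 : polVal ρ πstar r ≤ polVal ρ πstar rhat + εr :=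
    polVal_le_polVal_add hρ0 hρ1 hπstar fun s a => by linarith [(abs_le.mp (hεr s a)).1]
  have h2 : polVal ρ πRMB rhat ≤ polVal ρ πRMB r + εr :=
    polVal_le_polVal_add hρ0 hρ1 hπRMB fun s a => by linarith [(abs_le.mp (hεr s a)).2]
  have h3 := (abs_le.mp (hεs πstar hπstar rhat hrhat)).2
  have h4 := (abs_le.mp (hεs πRMB hπRMB rhat hrhat)).1
  linarith [hmax πstar hπstar]
end

section
/- Suppose Ê_a is an action-expectation estimator assigning to every policy π, state s, and reward g : S × A → [0,1] a real number Ê_a[π,s,g] with |E_{a∼π(·|s)}[g(s,a)] − Ê_a[π,s,g]| ≤ ε_a for every policy π, every state s, and every reward g : S × A → [0,1]. Suppose the policy π̂_RMF maximizes the fully empirical objective π ↦ Ê_s[s ↦ Ê_a[π,s,r̂]] over all policies, i.e. Ê_s[s ↦ Ê_a[π̂_RMF,s,r̂]] ≥ Ê_s[s ↦ Ê_a[π,s,r̂]] for every policy π. Then the suboptimality of π̂_RMF under the true reward satisfies r(π*) − r(π̂_RMF) ≤ 2ε_r + 2ε_s + 2ε_a. -/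
/-!
For every policy, the true value and the fully empirical objective differ by at most
`εr + εs + εa`: replacing `r` by `rhat` costs `εr` (`abs_polVal_sub_le`), replacing `ρ` by the
sample average costs `εs`, and replacing the action expectation by `Ea` inside that average costs
`εa` (`abs_empS_sub_le`). Using this for `πstar` and for `πRMF`, and the maximality of `πRMF` for
the empirical objective in between, gives twice that error.
-/

open Finset

/-- Averaging against a probability distribution preserves a pointwise error bound: this is the
step used for the reward error, under both `π(·|s)` and `ρ`. -/
theorem abs_sum_mul_sub_le {ι : Type*} [Fintype ι] (w f g : ι → ℝ) (ε : ℝ)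
    (hw0 : ∀ i, 0 ≤ w i) (hw1 : ∑ i, w i = 1) (h : ∀ i, |f i - g i| ≤ ε) :
    |∑ i, w i * f i - ∑ i, w i * g i| ≤ ε := by
  rw [← Finset.sum_sub_distrib]
  calc |∑ i, (w i * f i - w i * g i)|
      ≤ ∑ i, |w i * f i - w i * g i| := Finset.abs_sum_le_sum_abs _ _
    _ ≤ ∑ i, w i * ε := by
        refine Finset.sum_le_sum fun i _ => ?_
        rw [← mul_sub, abs_mul, abs_of_nonneg (hw0 i)]
        exact mul_le_mul_of_nonneg_left (h i) (hw0 i)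
    _ = ε := by rw [← Finset.sum_mul, hw1, one_mul]

theorem abs_polVal_sub_le {S A : Type*} [Fintype S] [Fintype A]
    (ρ : S → ℝ) (hρ0 : ∀ s, 0 ≤ ρ s) (hρ1 : ∑ s, ρ s = 1)
    (π f g : S → A → ℝ) (hπ : IsPolicy π) (ε : ℝ) (h : ∀ s a, |f s a - g s a| ≤ ε) :
    |polVal ρ π f - polVal ρ π g| ≤ ε :=
  abs_sum_mul_sub_le ρ _ _ ε hρ0 hρ1 fun s =>
    abs_sum_mul_sub_le (π s) _ _ ε (hπ.1 s) (hπ.2 s) (h s)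

theorem abs_empS_sub_le {S : Type*} {n : ℕ} (hn : 1 ≤ n) (samp : Fin n → S)
    (f g : S → ℝ) (ε : ℝ) (h : ∀ s, |f s - g s| ≤ ε) :
    |empS samp f - empS samp g| ≤ ε := by
  have hn0 : (0 : ℝ) < n := by exact_mod_cast hn
  unfold empS
  rw [← sub_div, ← Finset.sum_sub_distrib, abs_div, abs_of_pos hn0, div_le_iff₀ hn0]
  calc |∑ i, (f (samp i) - g (samp i))|
      ≤ ∑ i, |f (samp i) - g (samp i)| := Finset.abs_sum_le_sum_abs _ _
    _ ≤ ∑ _i : Fin n, ε := Finset.sum_le_sum fun i _ => h (samp i)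
    _ = ε * n := by simp [mul_comm]

theorem rmf_po_suboptimality
    {S A : Type*} [Fintype S] [Fintype A] [Nonempty S] [Nonempty A]
    (ρ : S → ℝ) (hρ0 : ∀ s, 0 ≤ ρ s) (hρ1 : ∑ s, ρ s = 1)
    (r rhat : S → A → ℝ)
    (hr : ∀ s a, 0 ≤ r s a ∧ r s a ≤ 1)
    (hrhat : ∀ s a, 0 ≤ rhat s a ∧ rhat s a ≤ 1)
    (εr : ℝ) (hεr0 : 0 ≤ εr)
    (hεr : ∀ s a, |rhat s a - r s a| ≤ εr)
    (n : ℕ) (hn : 1 ≤ n) (samp : Fin n → S)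
    (εs : ℝ) (hεs0 : 0 ≤ εs)
    (hεs : ∀ π : S → A → ℝ, IsPolicy π → ∀ g : S → A → ℝ,
      (∀ s a, 0 ≤ g s a ∧ g s a ≤ 1) →
      |polVal ρ π g - empS samp (fun s => ∑ a, π s a * g s a)| ≤ εs)
    -- the action-expectation estimator `Ê_a[π, s, g]` and its error bound
    (Ea : (S → A → ℝ) → S → (S → A → ℝ) → ℝ)
    (εa : ℝ) (hεa0 : 0 ≤ εa)
    (hεa : ∀ π : S → A → ℝ, IsPolicy π → ∀ s : S, ∀ g : S → A → ℝ,
      (∀ s a, 0 ≤ g s a ∧ g s a ≤ 1) →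
      |(∑ a, π s a * g s a) - Ea π s g| ≤ εa)
    (πstar : S → A → ℝ) (hπstar : IsPolicy πstar)
    (hopt : ∀ π : S → A → ℝ, IsPolicy π → polVal ρ π r ≤ polVal ρ πstar r)
    (πRMF : S → A → ℝ) (hπRMF : IsPolicy πRMF)
    (hmax : ∀ π : S → A → ℝ, IsPolicy π →
      empS samp (fun s => Ea π s rhat) ≤ empS samp (fun s => Ea πRMF s rhat)) :
    polVal ρ πstar r - polVal ρ πRMF r ≤ 2 * εr + 2 * εs + 2 * εa := by
  have key : ∀ π : S → A → ℝ, IsPolicy π →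
      |polVal ρ π r - empS samp (fun s => Ea π s rhat)| ≤ εr + εs + εa := by
    intro π hπ
    have h1 := abs_le.mp (abs_polVal_sub_le ρ hρ0 hρ1 π rhat r hπ εr hεr)
    have h2 := abs_le.mp (hεs π hπ rhat hrhat)
    have h3 := abs_le.mp (abs_empS_sub_le hn samp _ _ εa fun s => hεa π hπ s rhat hrhat)
    exact abs_le.mpr ⟨by linarith [h1.2, h2.1, h3.1], by linarith [h1.1, h2.2, h3.2]⟩
  have hs := abs_le.mp (key πstar hπstar)
  have hm := abs_le.mp (key πRMF hπRMF)
  linarith [hs.2, hm.1, hmax πstar hπstar]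
end
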